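/- Let q = 2p with p ≥ 2, λ = 2cos(π/q), α = 1/λ, and B_n = sin(nπ/q)/sin(π/q). Let Ω_{1/λ} = ⋃_{n=1}^{p−1} [(B_n − B_{n+1})/(B_n − B_{n−1}), (B_{n+1} − B_{n+2})/(B_{n+1} − B_n)) × [0, B_n/B_{n+1}]. Then the map 𝒯_{1/λ}(x,y) = (T_{1/λ}(x), 1/(d(x)λ + ε(x)y)) maps Ω_{1/λ} to Ω_{1/λ} and is bijective off of a set of two-dimensional Lebesgue measure zero. -/

import Mathlib

/-!
Put `λ = 2 cos (π / q)`. A point `(x, y)` is sent to `(s, 1 / w)` with `|1 / x| = s + d λ` and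
`w = d λ + ε y`. Since `0 ≤ y ≤ λ / 2` on `Ω`, a generic `w` determines `d` as the integer for
which `d λ` is nearest to `w`, and then `ε` and `y` as the sign and the size of the remainder; this
gives injectivity and an explicit inverse. Both the map and its inverse visibly stay in `Ω` unless
`d = 1` and `ε = -1`, because `Ω` contains a full rectangle of height `1 / λ` and, over
`[-1 / (1 + λ), 1)`, one of height `λ / 2`. In the remaining case `x ↦ -1 / x - λ` moves each left
endpoint of a cell of `Ω` to the next one and `y ↦ 1 / (λ - y)` does the same with the heights, so
cells are carried to cells.
-/

open Set MeasureTheory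

/-- The digit function `d(x) = ⌊|1/(xλ)| + 1 - α⌋` of the α-Rosen continued fraction. -/
noncomputable def dfun (lam α x : ℝ) : ℤ := ⌊|1 / (x * lam)| + 1 - α⌋

/-- The α-Rosen continued fraction map `T_α`. -/
noncomputable def Tmap (lam α x : ℝ) : ℝ :=
  if x = 0 then 0 else |1 / x| - lam * (dfun lam α x : ℝ)

/-- The two-dimensional natural extension map `𝒯_α(x, y) = (T_α(x), 1/(d(x)λ + ε(x)y))`. -/
noncomputable def Tnat (lam α : ℝ) (z : ℝ × ℝ) : ℝ × ℝ :=
  (Tmap lam α z.1, 1 / ((dfun lam α z.1 : ℝ) * lam + Real.sign z.1 * z.2))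

theorem exists_null_bijOn_diff {X Y : Type*} [MeasurableSpace X] [MeasurableSpace Y]
    {μ : Measure X} {ν : Measure Y} {f : X → Y} {s N : Set X} {t M : Set Y}
    (hN : μ N = 0) (hM : ν M = 0) (hmaps : MapsTo f s t) (hinj : InjOn f (s \ N))
    (hsurj : SurjOn f (s \ N) (t \ M)) :
    ∃ N' M', N' ⊆ s ∧ M' ⊆ t ∧ μ N' = 0 ∧ ν M' = 0 ∧ BijOn f (s \ N') (t \ M') := by
  have himage : f '' (s \ N) ⊆ t := (hmaps.mono_left sdiff_subset).image_subset
  have hmissed : t \ f '' (s \ N) ⊆ M := fun z hz ↦ by_contra fun hzM ↦ hz.2 (hsurj ⟨hz.1, hzM⟩)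
  refine ⟨s ∩ N, t \ f '' (s \ N), inter_subset_left, sdiff_subset,
    measure_mono_null inter_subset_right hN, measure_mono_null hmissed hM, ?_⟩
  rw [sdiff_self_inter, sdiff_sdiff_cancel_left himage]
  exact hinj.bijOn_image

theorem biUnion_Icc_one {X : Type*} (r : ℕ) (s : ℕ → Set X) :
    ⋃ n ∈ Finset.Icc 1 r, s n = ⋃ m < r, s (m + 1) := by
  ext z
  simp only [mem_iUnion, Finset.mem_Icc, exists_prop]
  constructor
  · rintro ⟨n, ⟨hn, hnr⟩, hz⟩
    exact ⟨n - 1, by omega, by rwa [Nat.sub_add_cancel hn]⟩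
  · rintro ⟨m, hm, hz⟩
    exact ⟨m + 1, ⟨by omega, hm⟩, hz⟩

theorem exists_eq_int_mul_add {c w : ℝ} (hc : 0 < c) (hw : ∀ j : ℤ, w ≠ j * (c / 2)) :
    ∃ (k : ℤ) (u : ℝ), u ≠ 0 ∧ |u| < c / 2 ∧ w = k * c + u := by
  set k := round (w / c)
  set u := w - k * c
  have hu : |u| ≤ c / 2 := by
    have hscale : u = (w / c - k) * c := by simp only [u]; field_simp
    rw [hscale, abs_mul, abs_of_pos hc]
    linarith [mul_le_mul_of_nonneg_right (abs_sub_round (w / c)) hc.le]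
  refine ⟨k, u, fun h ↦ hw (2 * k) ?_, hu.lt_of_ne fun h ↦ ?_, by ring⟩
  · push_cast; linarith
  · rcases eq_or_eq_neg_of_abs_eq h with h | h
    · exact hw (2 * k + 1) (by push_cast; linarith)
    · exact hw (2 * k - 1) (by push_cast; linarith)

theorem int_eq_of_mul_add_eq_mul_add {c u v : ℝ} {k l : ℤ} (hu : |u| < c / 2) (hv : |v| < c / 2)
    (h : k * c + u = l * c + v) : k = l := by
  have hc : 0 < c := by linarith [abs_nonneg u]
  have hdist : |((k - l : ℤ) : ℝ)| * c < 1 * c := by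
    rw [← abs_of_pos hc, ← abs_mul, abs_of_pos hc, show ((k - l : ℤ) : ℝ) * c = v - u by
      push_cast; linarith]
    linarith [abs_sub v u]
  have : |k - l| < 1 := by exact_mod_cast lt_of_mul_lt_mul_right hdist hc.le
  exact sub_eq_zero.1 (Int.abs_lt_one_iff.1 this)

theorem real_sign_mul_abs (x : ℝ) : x.sign * |x| = x := by
  rcases lt_trichotomy x 0 with h | rfl | h
  · rw [Real.sign_of_neg h, abs_of_neg h, neg_one_mul, neg_neg]
  · simp
  · rw [Real.sign_of_pos h, abs_of_pos h, one_mul]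

theorem abs_real_sign {x : ℝ} (hx : x ≠ 0) : |x.sign| = 1 := by
  rcases Real.sign_apply_eq_of_ne_zero x hx with h | h <;> simp [h]

theorem abs_real_sign_mul {x : ℝ} (hx : x ≠ 0) (y : ℝ) : |x.sign * y| = |y| := by
  rw [abs_mul, abs_real_sign hx, one_mul]

theorem real_sign_sign_div {x c : ℝ} (hc : 0 < c) : (x.sign / c).sign = x.sign := by
  rcases Real.sign_apply_eq x with h | h | h <;> rw [h]
  · exact Real.sign_of_neg (div_neg_of_neg_of_pos neg_one_lt_zero hc)
  · rw [zero_div, Real.sign_zero]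
  · exact Real.sign_of_pos (one_div_pos.2 hc)

theorem Ico_mul_one_div {c : ℝ} (hc : c ≠ 0) :
    Ico (c * (1 / c - 1)) (c * (1 / c)) = Ico (1 - c) 1 := by
  rw [mul_sub, mul_one_div_cancel hc, mul_one]

section

variable {lam α : ℝ}

theorem dfun_eq_iff (hlam : 0 < lam) {x : ℝ} {k : ℤ} :
    dfun lam α x = k ↔ |1 / x| - lam * k ∈ Ico (lam * (α - 1)) (lam * α) := by
  have hdiv : |1 / (x * lam)| = |1 / x| / lam := by
    rw [← div_div, abs_div, abs_of_pos hlam]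
  have hcancel : lam * (|1 / x| / lam) = |1 / x| := mul_div_cancel₀ _ hlam.ne'
  rw [dfun, Int.floor_eq_iff, hdiv, mem_Ico, ← mul_le_mul_iff_right₀ hlam,
    ← mul_lt_mul_iff_right₀ hlam]
  constructor <;> rintro ⟨h₁, h₂⟩ <;> constructor <;> linarith

theorem Tmap_of_ne_zero {x : ℝ} (hx : x ≠ 0) : Tmap lam α x = |1 / x| - lam * dfun lam α x :=
  if_neg hx

theorem Tmap_mem_Ico (hlam : 0 < lam) {x : ℝ} (hx : x ≠ 0) :
    Tmap lam α x ∈ Ico (lam * (α - 1)) (lam * α) :=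
  Tmap_of_ne_zero hx ▸ (dfun_eq_iff hlam).1 rfl

-- The digit of `0` is `0`, so the second coordinate is the junk value `1 / 0 = 0`.
theorem Tnat_zero_left (lam : ℝ) (hα : α ∈ Ioc 0 1) (y : ℝ) : Tnat lam α (0, y) = (0, 0) := by
  have hd : dfun lam α 0 = 0 := by
    simp only [dfun, zero_mul, div_zero, abs_zero, zero_add, Int.floor_eq_zero_iff]
    exact ⟨by linarith [hα.2], by linarith [hα.1]⟩
  simp [Tnat, Tmap, hd]

theorem injOn_Tnat_strip (lam α : ℝ) :
    InjOn (Tnat lam α) {z | z.1 ≠ 0 ∧ z.2 ∈ Ioo 0 (lam / 2)} := by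
  rintro ⟨x₁, y₁⟩ ⟨hx₁ : x₁ ≠ 0, hy₁ : y₁ ∈ Ioo 0 (lam / 2)⟩
    ⟨x₂, y₂⟩ ⟨hx₂ : x₂ ≠ 0, hy₂ : y₂ ∈ Ioo 0 (lam / 2)⟩ h
  have habs {x y : ℝ} (hx : x ≠ 0) (hy : y ∈ Ioo 0 (lam / 2)) : |x.sign * y| = y := by
    rw [abs_real_sign_mul hx, abs_of_pos hy.1]
  simp only [Tnat, Prod.mk.injEq, one_div, inv_inj, Tmap_of_ne_zero hx₁, Tmap_of_ne_zero hx₂] at h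
  obtain ⟨hT, hw⟩ := h
  have hd : dfun lam α x₁ = dfun lam α x₂ :=
    int_eq_of_mul_add_eq_mul_add ((habs hx₁ hy₁).trans_lt hy₁.2) ((habs hx₂ hy₂).trans_lt hy₂.2) hw
  rw [hd] at hT hw
  have hsy : x₁.sign * y₁ = x₂.sign * y₂ := add_left_cancel hw
  have hy : y₁ = y₂ := by rw [← habs hx₁ hy₁, hsy, habs hx₂ hy₂]
  have hsign : x₁.sign = x₂.sign := mul_right_cancel₀ hy₁.1.ne' (hy ▸ hsy)
  have hx_abs : |x₁| = |x₂| := by simpa only [abs_inv, sub_left_inj, inv_inj] using hT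
  have hx : x₁ = x₂ := by rw [← real_sign_mul_abs x₁, hsign, hx_abs, real_sign_mul_abs]
  rw [hx, hy]

theorem Tnat_sign_div_abs (hlam : 0 < lam) {s u : ℝ} {k : ℤ}
    (hs : s ∈ Ico (lam * (α - 1)) (lam * α)) (hk : 0 < s + lam * k) (hu : u ≠ 0) :
    Tnat lam α (u.sign / (s + lam * k), |u|) = (s, 1 / (k * lam + u)) := by
  set x := u.sign / (s + lam * k) with hx
  have hx0 : x ≠ 0 := div_ne_zero (Real.sign_eq_zero_iff.not.2 hu) hk.ne'
  have habs : |1 / x| = s + lam * k := by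
    rw [hx, one_div_div, abs_div, abs_real_sign hu, div_one, abs_of_pos hk]
  have hd : dfun lam α x = k := (dfun_eq_iff hlam).2 (by rwa [habs, add_sub_cancel_right])
  have hT : Tmap lam α x = s := by rw [Tmap_of_ne_zero hx0, hd, habs, add_sub_cancel_right]
  have hsign : x.sign * |u| = u := by rw [hx, real_sign_sign_div hk, real_sign_mul_abs]
  simp only [Tnat, hd, hT, hsign]

end

/-- The properties of `B_n = sin (n π / q) / sin (π / q)`, `q = 2p`, on which the geometry of
`Ω_{1/λ}` rests, with `r = p - 1` the number of its cells. -/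
structure IsRosenSeq (lam : ℝ) (r : ℕ) (B : ℕ → ℝ) : Prop where
  r_pos : 0 < r
  zero : B 0 = 0
  one : B 1 = 1
  add_two (n : ℕ) : B (n + 2) = lam * B (n + 1) - B n
  strictMonoOn : StrictMonoOn B (Iic (r + 1))
  reflect : B (r + 2) = B r

/-- The left endpoint of the cell with index `n = m + 1` of `Ω_{1/λ}`. Counting from `0` makes
it the `m`-th iterate of `1 - λ` under `T_{1/λ}`, for `m < p - 1`. -/
noncomputable def cellLeft (B : ℕ → ℝ) (m : ℕ) : ℝ := (B (m + 1) - B (m + 2)) / (B (m + 1) - B m)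

/-- The height of the cell with index `n = m + 1` of `Ω_{1/λ}`. -/
noncomputable def cellHeight (B : ℕ → ℝ) (m : ℕ) : ℝ := B (m + 1) / B (m + 2)

/-- The domain `Ω_{1/λ}` of the natural extension, with `r = p - 1` cells counted from `0`. -/
def rosenDomain (B : ℕ → ℝ) (r : ℕ) : Set (ℝ × ℝ) :=
  ⋃ m < r, Ico (cellLeft B m) (cellLeft B (m + 1)) ×ˢ Icc 0 (cellHeight B m)

theorem mem_rosenDomain {B : ℕ → ℝ} {r : ℕ} {x y : ℝ} :
    (x, y) ∈ rosenDomain B r ↔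
      ∃ m < r, x ∈ Ico (cellLeft B m) (cellLeft B (m + 1)) ∧ y ∈ Icc 0 (cellHeight B m) := by
  simp only [rosenDomain, mem_iUnion, mem_prod, exists_prop]

theorem isRosenSeq_sin_div_sin {r : ℕ} {θ : ℝ} (hr : 0 < r) (hθ : (r + 1) * θ = Real.pi / 2) :
    IsRosenSeq (2 * Real.cos θ) r fun n ↦ Real.sin (n * θ) / Real.sin θ := by
  have hθ_pos : 0 < θ := pos_of_mul_pos_right (hθ ▸ Real.pi_div_two_pos) (by positivity)
  have hθ_lt : θ < Real.pi := by
    nlinarith [Real.pi_pos, mul_nonneg (Nat.cast_nonneg (α := ℝ) r) hθ_pos.le]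
  have hsin : 0 < Real.sin θ := Real.sin_pos_of_pos_of_lt_pi hθ_pos hθ_lt
  refine ⟨hr, by simp, by simp [hsin.ne'], fun n ↦ ?_, fun m _ n hn hmn ↦ ?_, ?_⟩
  · have h₂ : ((n + 2 : ℕ) : ℝ) * θ = (n + 1 : ℕ) * θ + θ := by push_cast; ring
    have h₀ : (n : ℝ) * θ = (n + 1 : ℕ) * θ - θ := by push_cast; ring
    simp only [h₂, h₀, Real.sin_add, Real.sin_sub]
    ring
  · have hnr : (n : ℝ) ≤ r + 1 := by exact_mod_cast hn
    have hm : 0 ≤ m * θ := by positivity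
    refine div_lt_div_of_pos_right (Real.sin_lt_sin_of_lt_of_le_pi_div_two ?_ ?_ ?_) hsin
    · linarith [Real.pi_pos]
    · exact hθ ▸ mul_le_mul_of_nonneg_right hnr hθ_pos.le
    · gcongr
  · have hreflect : ((r + 2 : ℕ) : ℝ) * θ = Real.pi - r * θ := by push_cast; linarith
    simp only [hreflect, Real.sin_pi_sub]

namespace IsRosenSeq

variable {lam : ℝ} {r m : ℕ} {B : ℕ → ℝ}

theorem lt_succ (hB : IsRosenSeq lam r B) (hm : m ≤ r) : B m < B (m + 1) :=
  hB.strictMonoOn (mem_Iic.2 (by omega)) (mem_Iic.2 (by omega)) m.lt_succ_self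

theorem nonneg (hB : IsRosenSeq lam r B) (hm : m ≤ r) : 0 ≤ B m :=
  hB.zero ▸ hB.strictMonoOn.monotoneOn (mem_Iic.2 (by omega)) (mem_Iic.2 (by omega)) m.zero_le

theorem succ_pos (hB : IsRosenSeq lam r B) (hm : m ≤ r) : 0 < B (m + 1) :=
  (hB.nonneg hm).trans_lt (hB.lt_succ hm)

theorem two (hB : IsRosenSeq lam r B) : B 2 = lam := by
  rw [hB.add_two, zero_add, hB.one, hB.zero, mul_one, sub_zero]

theorem one_lt_lam (hB : IsRosenSeq lam r B) : 1 < lam :=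
  hB.two ▸ hB.one ▸ hB.lt_succ hB.r_pos

theorem lam_pos (hB : IsRosenSeq lam r B) : 0 < lam := one_pos.trans hB.one_lt_lam

theorem lam_lt_two (hB : IsRosenSeq lam r B) : lam < 2 := by
  have hlast : lam * B (r + 1) = 2 * B r := by linarith [hB.add_two r, hB.reflect]
  have : lam * B (r + 1) < 2 * B (r + 1) := by linarith [hB.lt_succ le_rfl]
  exact lt_of_mul_lt_mul_right this (hB.succ_pos le_rfl).le

theorem cellLeft_zero (hB : IsRosenSeq lam r B) : cellLeft B 0 = 1 - lam := by
  simp [cellLeft, hB.zero, hB.one, hB.two]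

theorem cellLeft_last (hB : IsRosenSeq lam r B) : cellLeft B r = 1 := by
  rw [cellLeft, hB.reflect]
  exact div_self (sub_pos.2 (hB.lt_succ le_rfl)).ne'

theorem cellLeft_neg (hB : IsRosenSeq lam r B) (hm : m < r) : cellLeft B m < 0 :=
  div_neg_of_neg_of_pos (sub_neg.2 (hB.lt_succ hm)) (sub_pos.2 (hB.lt_succ hm.le))

theorem cellLeft_le_one (hB : IsRosenSeq lam r B) (hm : m ≤ r) : cellLeft B m ≤ 1 := by
  rcases hm.eq_or_lt with rfl | hm
  · exact hB.cellLeft_last.le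
  · exact (hB.cellLeft_neg hm).le.trans zero_le_one

theorem one_sub_lam_le_cellLeft (hB : IsRosenSeq lam r B) (hm : m ≤ r) :
    1 - lam ≤ cellLeft B m := by
  rw [cellLeft, le_div_iff₀ (sub_pos.2 (hB.lt_succ hm)), hB.add_two]
  linarith [mul_nonneg (sub_pos.2 hB.lam_lt_two).le (hB.nonneg hm)]

theorem cellLeft_succ (hB : IsRosenSeq lam r B) (hm : m < r) :
    cellLeft B (m + 1) = -1 / cellLeft B m - lam := by
  have h₀ : B (m + 1) - B (m + 2) ≠ 0 := (sub_neg.2 (hB.lt_succ hm)).ne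
  have h₁ : B (m + 2) - B (m + 1) ≠ 0 := (sub_pos.2 (hB.lt_succ hm)).ne'
  rw [cellLeft, cellLeft, div_div_eq_mul_div, div_sub' h₀, div_eq_div_iff h₁ h₀,
    hB.add_two (m + 1)]
  linear_combination (B (m + 1) - B (m + 2)) * hB.add_two m

theorem cellLeft_succ_le_iff (hB : IsRosenSeq lam r B) (hm : m < r) {x : ℝ} (hx : x < 0) :
    cellLeft B (m + 1) ≤ -1 / x - lam ↔ cellLeft B m ≤ x := by
  rw [hB.cellLeft_succ hm, sub_le_sub_iff_right, neg_div, neg_div, neg_le_neg_iff,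
    one_div_le_one_div_of_neg hx (hB.cellLeft_neg hm)]

theorem cellHeight_zero (hB : IsRosenSeq lam r B) : cellHeight B 0 = 1 / lam := by
  rw [cellHeight, hB.one, hB.two]

theorem cellHeight_succ (hB : IsRosenSeq lam r B) (hm : m < r) :
    cellHeight B (m + 1) = 1 / (lam - cellHeight B m) := by
  rw [cellHeight, cellHeight, hB.add_two (m + 1), sub_div' (hB.succ_pos hm).ne', one_div_div]

theorem one_div_lam_le_cellHeight (hB : IsRosenSeq lam r B) (hm : m < r) :
    1 / lam ≤ cellHeight B m := by
  rw [cellHeight, div_le_div_iff₀ hB.lam_pos (hB.succ_pos hm)]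
  linarith [hB.add_two m, hB.nonneg hm.le]

theorem cellHeight_last (hB : IsRosenSeq lam r B) (hm : m + 1 = r) : cellHeight B m = lam / 2 := by
  subst hm
  rw [cellHeight, div_eq_div_iff (hB.succ_pos le_rfl).ne' two_ne_zero]
  linarith [hB.add_two (m + 1), hB.reflect]

theorem cellHeight_le (hB : IsRosenSeq lam r B) (hm : m < r) : cellHeight B m ≤ lam / 2 := by
  rcases (Nat.succ_le_of_lt hm).eq_or_lt with hlast | hm'
  · exact (hB.cellHeight_last hlast).le
  · rw [cellHeight, div_le_div_iff₀ (hB.succ_pos hm) two_pos]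
    linarith [hB.add_two (m + 1), hB.lt_succ hm, hB.lt_succ hm']

theorem one_div_le_cellHeight_succ_iff (hB : IsRosenSeq lam r B) (hm : m < r) {y : ℝ}
    (hy : y < lam) : 1 / (lam - y) ≤ cellHeight B (m + 1) ↔ y ≤ cellHeight B m := by
  have : cellHeight B m < lam := by linarith [hB.cellHeight_le hm, hB.lam_pos]
  rw [hB.cellHeight_succ hm, one_div_le_one_div (sub_pos.2 hy) (sub_pos.2 this),
    sub_le_sub_iff_left]

theorem rosenDomain_subset (hB : IsRosenSeq lam r B) :
    rosenDomain B r ⊆ Ico (1 - lam) 1 ×ˢ Icc 0 (lam / 2) := by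
  rintro ⟨x, y⟩ hz
  obtain ⟨m, hm, hx, hy⟩ := mem_rosenDomain.1 hz
  exact ⟨⟨(hB.one_sub_lam_le_cellLeft hm.le).trans hx.1, hx.2.trans_le (hB.cellLeft_le_one hm)⟩,
    hy.1, hy.2.trans (hB.cellHeight_le hm)⟩

theorem exists_mem_cell (hB : IsRosenSeq lam r B) {x : ℝ} (hx : x ∈ Ico (1 - lam) 1) :
    ∃ m < r, x ∈ Ico (cellLeft B m) (cellLeft B (m + 1)) := by
  have hex : ∃ n, x < cellLeft B n := ⟨r, hB.cellLeft_last ▸ hx.2⟩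
  classical
  obtain ⟨m, hm⟩ : ∃ m, Nat.find hex = m + 1 := by
    refine Nat.exists_eq_succ_of_ne_zero fun h ↦ ?_
    exact absurd (hB.cellLeft_zero ▸ (Nat.find_eq_zero hex).1 h) hx.1.not_gt
  have hmr : m + 1 ≤ r := hm ▸ Nat.find_min' hex (hB.cellLeft_last ▸ hx.2)
  exact ⟨m, hmr, not_lt.1 (Nat.find_min hex (by omega)), hm ▸ Nat.find_spec hex⟩

theorem lower_rectangle_subset (hB : IsRosenSeq lam r B) :
    Ico (1 - lam) 1 ×ˢ Icc 0 (1 / lam) ⊆ rosenDomain B r := by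
  rintro ⟨x, y⟩ ⟨hx, hy⟩
  obtain ⟨m, hm, hxm⟩ := hB.exists_mem_cell hx
  exact mem_rosenDomain.2 ⟨m, hm, hxm, hy.1, hy.2.trans (hB.one_div_lam_le_cellHeight hm)⟩

theorem right_rectangle_subset (hB : IsRosenSeq lam r B) :
    Ico (-1 / (1 + lam)) 1 ×ˢ Icc 0 (lam / 2) ⊆ rosenDomain B r := by
  rintro ⟨x, y⟩ ⟨hx, hy⟩
  obtain ⟨m, hm⟩ : ∃ m, r = m + 1 := Nat.exists_eq_succ_of_ne_zero hB.r_pos.ne'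
  have hlast : cellLeft B (m + 1) = 1 := hm ▸ hB.cellLeft_last
  have hneg : -1 / (1 + lam) < 0 := div_neg_of_neg_of_pos (by norm_num) (by linarith [hB.lam_pos])
  have hleft : cellLeft B m ≤ -1 / (1 + lam) := by
    rw [← hB.cellLeft_succ_le_iff (by omega) hneg, hlast, div_div_eq_mul_div,
      mul_div_cancel_left₀ _ (by norm_num), add_sub_cancel_right]
  exact mem_rosenDomain.2 ⟨m, by omega, ⟨hleft.trans hx.1, hlast ▸ hx.2⟩,
    hy.1, hB.cellHeight_last hm.symm ▸ hy.2⟩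

theorem mem_rosenDomain_iff_shift (hB : IsRosenSeq lam r B) {x y : ℝ} (hx : x < 0)
    (hx' : -1 / x - lam < 1) (hy : 0 < y) (hy' : y < lam) :
    (-1 / x - lam, 1 / (lam - y)) ∈ rosenDomain B r ↔ (x, y) ∈ rosenDomain B r := by
  have hpos : 0 ≤ 1 / (lam - y) := one_div_nonneg.2 (sub_pos.2 hy').le
  have hiff {m : ℕ} (hm : m + 1 < r) :
      (-1 / x - lam ∈ Ico (cellLeft B (m + 1)) (cellLeft B (m + 2)) ∧
        1 / (lam - y) ∈ Icc 0 (cellHeight B (m + 1))) ↔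
      x ∈ Ico (cellLeft B m) (cellLeft B (m + 1)) ∧ y ∈ Icc 0 (cellHeight B m) := by
    simp only [mem_Ico, mem_Icc, hpos, hy.le, true_and, ← not_le,
      hB.cellLeft_succ_le_iff (m.lt_succ_self.trans hm) hx, hB.cellLeft_succ_le_iff hm hx,
      hB.one_div_le_cellHeight_succ_iff (m.lt_succ_self.trans hm) hy']
  simp only [mem_rosenDomain]
  constructor
  · rintro ⟨_ | m, hm, hz⟩
    · have : 1 / lam < 1 / (lam - y) := one_div_lt_one_div_of_lt (sub_pos.2 hy') (by linarith)
      exact absurd (hB.cellHeight_zero ▸ hz.2.2) this.not_ge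
    · exact ⟨m, by omega, (hiff hm).1 hz⟩
  · rintro ⟨m, hm, hz⟩
    have hm' : m + 1 ≠ r := fun hlast ↦ hx'.not_ge <| by
      have := (hB.cellLeft_succ_le_iff hm hx).2 hz.1.1
      rwa [hlast, hB.cellLeft_last] at this
    exact ⟨m + 1, by omega, (hiff (by omega)).2 hz⟩

theorem Tmap_mem_Ico_one_sub_lam (hB : IsRosenSeq lam r B) {x : ℝ} (hx : x ≠ 0) :
    Tmap lam (1 / lam) x ∈ Ico (1 - lam) 1 :=
  Ico_mul_one_div hB.lam_pos.ne' ▸ Tmap_mem_Ico hB.lam_pos hx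

theorem one_le_dfun (hB : IsRosenSeq lam r B) {x : ℝ} (hx : x ∈ Ico (1 - lam) 1) (hx0 : x ≠ 0) :
    1 ≤ dfun lam (1 / lam) x := by
  have habs : |x| < 1 := abs_lt.2 ⟨by linarith [hx.1, hB.lam_lt_two], hx.2⟩
  have hinv : 1 < |1 / x| := by
    rwa [abs_div, abs_one, one_lt_div (abs_pos.2 hx0)]
  have hpos : 0 < lam * dfun lam (1 / lam) x := by
    linarith [(hB.Tmap_mem_Ico_one_sub_lam hx0).2, Tmap_of_ne_zero (lam := lam) (α := 1 / lam) hx0]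
  exact_mod_cast pos_of_mul_pos_right hpos hB.lam_pos.le

theorem injOn_Tnat (hB : IsRosenSeq lam r B) (α : ℝ) :
    InjOn (Tnat lam α) (rosenDomain B r \ (Prod.fst ⁻¹' {0} ∪ Prod.snd ⁻¹' {0, lam / 2})) := by
  refine (injOn_Tnat_strip lam α).mono ?_
  rintro z ⟨hz, hgeneric⟩
  simp only [mem_union, mem_preimage, mem_insert_iff, mem_singleton_iff, not_or] at hgeneric
  obtain ⟨hx0, hy0, hy2⟩ := hgeneric
  obtain ⟨-, hy⟩ := hB.rosenDomain_subset hz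
  exact ⟨hx0, hy.1.lt_of_ne' hy0, hy.2.lt_of_ne hy2⟩

theorem neg_and_dfun_eq_one_and_pos (hB : IsRosenSeq lam r B) {x y : ℝ} (hx : x ∈ Ico (1 - lam) 1)
    (hx0 : x ≠ 0) (hy : y ∈ Icc 0 (lam / 2))
    (hw : dfun lam (1 / lam) x * lam + x.sign * y < lam) :
    x < 0 ∧ dfun lam (1 / lam) x = 1 ∧ 0 < y := by
  have hlam := hB.lam_pos
  have hd := hB.one_le_dfun hx hx0
  have hdlam {n : ℤ} (hn : n ≤ dfun lam (1 / lam) x) : n * lam ≤ dfun lam (1 / lam) x * lam :=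
    mul_le_mul_of_nonneg_right (Int.cast_le.2 hn) hlam.le
  have h1 := hdlam hd
  have hneg : x < 0 := by
    by_contra! hpos
    rw [Real.sign_of_pos (hpos.lt_of_ne' hx0)] at hw
    push_cast at h1
    linarith [hy.1]
  rw [Real.sign_of_neg hneg] at hw
  refine ⟨hneg, by_contra fun hne ↦ ?_, by push_cast at h1; linarith⟩
  have h2 := hdlam (n := 2) (by omega)
  push_cast at h2
  linarith [hy.2]

theorem mapsTo_Tnat (hB : IsRosenSeq lam r B) :
    MapsTo (Tnat lam (1 / lam)) (rosenDomain B r) (rosenDomain B r) := by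
  rintro ⟨x, y⟩ hz
  obtain ⟨hx : x ∈ Ico (1 - lam) 1, hy : y ∈ Icc 0 (lam / 2)⟩ := hB.rosenDomain_subset hz
  have hlam := hB.lam_pos
  rcases eq_or_ne x 0 with rfl | hx0
  · have hα : 1 / lam ∈ Ioc 0 1 :=
      ⟨one_div_pos.2 hlam, (div_le_one hlam).2 hB.one_lt_lam.le⟩
    rw [Tnat_zero_left lam hα]
    exact hB.lower_rectangle_subset ⟨hx, le_rfl, one_div_nonneg.2 hlam.le⟩
  have hT := hB.Tmap_mem_Ico_one_sub_lam hx0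
  by_cases hw : lam ≤ dfun lam (1 / lam) x * lam + x.sign * y
  · exact hB.lower_rectangle_subset
      ⟨hT, one_div_nonneg.2 (hlam.le.trans hw), one_div_le_one_div_of_le hlam hw⟩
  obtain ⟨hneg, hd, hy0⟩ := hB.neg_and_dfun_eq_one_and_pos hx hx0 hy (not_le.1 hw)
  have hTx : Tmap lam (1 / lam) x = -1 / x - lam := by
    rw [Tmap_of_ne_zero hx0, hd, abs_of_neg (one_div_neg.2 hneg), Int.cast_one, mul_one, neg_div]
  have himage : Tnat lam (1 / lam) (x, y) = (-1 / x - lam, 1 / (lam - y)) := by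
    simp only [Tnat, hTx, hd, Real.sign_of_neg hneg, Int.cast_one, one_mul, neg_one_mul,
      ← sub_eq_add_neg]
  rw [himage, hB.mem_rosenDomain_iff_shift hneg (hTx ▸ hT.2) hy0 (by linarith [hy.2])]
  exact hz

theorem sign_div_mem_rosenDomain (hB : IsRosenSeq lam r B) {s u : ℝ} {k : ℤ}
    (hs : s ∈ Ioo (1 - lam) 1) (hk : 1 ≤ k) (hu : u ≠ 0) (hu' : |u| ≤ lam / 2)
    (hz : (s, 1 / (k * lam + u)) ∈ rosenDomain B r) :
    (u.sign / (s + lam * k), |u|) ∈ rosenDomain B r := by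
  have hlam := hB.lam_pos
  have hkR : (1 : ℝ) ≤ k := by exact_mod_cast hk
  have hsk : 1 < s + lam * k := by linarith [hs.1, le_mul_of_one_le_right hlam.le hkR]
  have hy : |u| ∈ Icc 0 (lam / 2) := ⟨abs_nonneg u, hu'⟩
  rcases hu.lt_or_gt with hneg | hpos
  · rw [Real.sign_of_neg hneg]
    rcases hk.eq_or_lt' with rfl | hk2
    · rw [Int.cast_one, one_mul] at hz
      rw [Int.cast_one, mul_one] at hsk ⊢
      rw [abs_of_neg hneg] at hu' ⊢
      have hx : -1 / (s + lam) < 0 := div_neg_of_neg_of_pos neg_one_lt_zero (by linarith)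
      have hs_eq : -1 / (-1 / (s + lam)) - lam = s := by
        rw [div_div_cancel₀ (by norm_num), add_sub_cancel_right]
      rw [← hB.mem_rosenDomain_iff_shift hx (hs_eq.trans_lt hs.2) (neg_pos.2 hneg) (by linarith),
        hs_eq, sub_neg_eq_add]
      exact hz
    · have hkR2 : (2 : ℝ) ≤ k := by exact_mod_cast hk2
      have hlk : lam * 2 ≤ lam * k := mul_le_mul_of_nonneg_left hkR2 hlam.le
      refine hB.right_rectangle_subset ⟨⟨?_, ?_⟩, hy⟩
      · simp only [neg_div]
        exact neg_le_neg (one_div_le_one_div_of_le (by linarith) (by linarith [hs.1]))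
      · exact (div_neg_of_neg_of_pos neg_one_lt_zero (by linarith)).trans one_pos
  · rw [Real.sign_of_pos hpos]
    have hleft : -1 / (1 + lam) ≤ 0 := div_nonpos_of_nonpos_of_nonneg (by simp) (by linarith)
    exact hB.right_rectangle_subset
      ⟨⟨hleft.trans (one_div_pos.2 (by linarith)).le, (div_lt_one (by linarith)).2 hsk⟩, hy⟩

theorem surjOn_Tnat (hB : IsRosenSeq lam r B) :
    SurjOn (Tnat lam (1 / lam))
      (rosenDomain B r \ (Prod.fst ⁻¹' {0} ∪ Prod.snd ⁻¹' {0, lam / 2}))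
      (rosenDomain B r \
        (Prod.fst ⁻¹' {1 - lam} ∪ Prod.snd ⁻¹' range fun j : ℤ ↦ 1 / (j * (lam / 2)))) := by
  rintro ⟨s, t⟩ ⟨hz, hgeneric⟩
  simp only [mem_union, mem_preimage, mem_singleton_iff, mem_range, not_or, not_exists]
    at hgeneric
  obtain ⟨hs0, ht_ne⟩ := hgeneric
  obtain ⟨hs : s ∈ Ico (1 - lam) 1, ht : t ∈ Icc 0 (lam / 2)⟩ := hB.rosenDomain_subset hz
  have hlam := hB.lam_pos
  have ht0 : 0 < t := ht.1.lt_of_ne (by simpa using ht_ne 0)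
  have hw_gt : lam / 2 < 1 / t := by
    rw [lt_div_iff₀ ht0]
    nlinarith [ht.2, hB.lam_lt_two]
  obtain ⟨k, u, hu0, hu, hw⟩ := exists_eq_int_mul_add (w := 1 / t) hlam fun j h ↦
    ht_ne j (by rw [← h, one_div_one_div])
  have hk : 1 ≤ k := by
    have : 0 < (k : ℝ) * lam := by linarith [le_abs_self u]
    exact_mod_cast pos_of_mul_pos_left this hlam.le
  have hkR : (1 : ℝ) ≤ k := by exact_mod_cast hk
  have hsk : 0 < s + lam * k := by linarith [hs.1, le_mul_of_one_le_right hlam.le hkR]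
  have ht_eq : 1 / (k * lam + u) = t := by rw [← hw, one_div_one_div]
  refine ⟨(u.sign / (s + lam * k), |u|), ⟨?_, ?_⟩, ?_⟩
  · exact hB.sign_div_mem_rosenDomain ⟨hs.1.lt_of_ne' hs0, hs.2⟩ hk hu0 hu.le (ht_eq ▸ hz)
  · simp [Real.sign_eq_zero_iff, hu0, hsk.ne', hu.ne]
  · rw [Tnat_sign_div_abs hlam (Ico_mul_one_div hlam.ne' ▸ hs) hsk hu0, ht_eq]

end IsRosenSeq

/-- Theorem 2.4: for even `q = 2p` and `α = 1/λ`, the natural extension map `𝒯_{1/λ}`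
is a bijection of `Ω_{1/λ}` off of a set of Lebesgue measure zero. -/
theorem stmt6 (p q : ℕ) (hp : 2 ≤ p) (hq : q = 2 * p) (lam : ℝ)
    (hlam : lam = 2 * Real.cos (Real.pi / q))
    (B : ℕ → ℝ)
    (hB : ∀ n : ℕ, B n = Real.sin (n * Real.pi / q) / Real.sin (Real.pi / q))
    (Ω : Set (ℝ × ℝ))
    (hΩ : Ω = ⋃ n ∈ Finset.Icc 1 (p - 1),
      Ico ((B n - B (n + 1)) / (B n - B (n - 1))) ((B (n + 1) - B (n + 2)) / (B (n + 1) - B n))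
        ×ˢ Icc (0 : ℝ) (B n / B (n + 1))) :
    ∃ N N' : Set (ℝ × ℝ), N ⊆ Ω ∧ N' ⊆ Ω ∧ volume N = 0 ∧ volume N' = 0 ∧
      Set.BijOn (Tnat lam (1 / lam)) (Ω \ N) (Ω \ N') := by
  obtain ⟨r, rfl⟩ : ∃ r, p = r + 1 := ⟨p - 1, by omega⟩
  have hθ : (r + 1) * (Real.pi / q) = Real.pi / 2 := by rw [hq]; push_cast; field_simp
  have hBseq : IsRosenSeq lam r B := by
    rw [hlam, funext hB]
    simpa only [mul_div_assoc] using isRosenSeq_sin_div_sin (by omega) hθ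
  have hΩ_eq : Ω = rosenDomain B r := by rw [hΩ, Nat.add_sub_cancel, biUnion_Icc_one]; rfl
  subst hΩ_eq
  have hnull_fst (a : ℝ) : volume (Prod.fst ⁻¹' {a} : Set (ℝ × ℝ)) = 0 :=
    Measure.quasiMeasurePreserving_fst.preimage_null (measure_singleton a)
  have hnull_snd {S : Set ℝ} (hS : S.Countable) : volume (Prod.snd ⁻¹' S : Set (ℝ × ℝ)) = 0 :=
    Measure.quasiMeasurePreserving_snd.preimage_null (hS.measure_zero volume)
  exact exists_null_bijOn_diff
    (measure_union_null (hnull_fst 0) (hnull_snd (to_countable _)))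
    (measure_union_null (hnull_fst (1 - lam)) (hnull_snd (countable_range _)))
    hBseq.mapsTo_Tnat (hBseq.injOn_Tnat _) hBseq.surjOn_Tnat
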